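/- There is no homogeneous ideal I ⊆ k[x_1,x_2,x_3] such that k[x_1,x_2,x_3]/I is a level standard graded artinian algebra with h-vector (1, 3, 6, 10, 9, 7, 5, 2); that is, (1,3,6,10,9,7,5,2) is not a level h-vector. -/

import Mathlib

/-!
Macaulay duality turns the statement into linear algebra. The degree 7 part of the ideal `I` is cut
out by two functionals `φ, ψ`, and levelness says that a form of degree `d ≤ 7` lies in `I` exactly
when both functionals vanish on its multiples of degree 7 (`mem_of_mul_mem`). Call a pair `(p, q)`
of forms of degree `d` a syzygy if `φ (p r) + ψ (q r) = 0` for all forms `r` of degree `7 - d`. The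
syzygies of degree `d` form a space of dimension `2 dim R_d - h_{7-d}` (`finrank_syzygies`): this is
`2 * 3 - 5 = 1` for `d = 1` and `2 * 6 - 7 = 5` for `d = 2`.

Let `(l₁, l₂)` span the linear syzygies. If `(p, q)` is a quadratic syzygy, the cubic
`l₂ p - l₁ q` annihilates `φ` and `ψ`, hence lies in `I`; as `h_3 = 10`, it is zero. So all quadratic
syzygies are proportional to `(l₁, l₂)` over the fraction field (`no_linear_syzygy`).

* If `l₁, l₂` are coprime, the quadratic syzygies are the multiples of `(l₁, l₂)` by linear forms,
  a space of dimension at most `3 < 5`.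
* Otherwise, after exchanging `φ` and `ψ` if needed, `l₂ = β l₁`, and the functional
  `F = φ + β ψ` is annihilated by a space of quadrics of dimension 5. Then the quadratic
  contractions of `F` span at most a line, which forces two independent linear forms to annihilate
  `F` (`two_le_ker_catal`); these give two independent linear syzygies, a contradiction.
-/

open MvPolynomial

/-- The degree-`d` graded piece of the quotient `k[x_1,…,x_r]/I`, realized as the image of
the space of homogeneous polynomials of degree `d` in the quotient. -/
noncomputable def quotPiece (k : Type) [Field k] (r : ℕ)
    (I : Ideal (MvPolynomial (Fin r) k)) (d : ℕ) :
    Submodule k (MvPolynomial (Fin r) k ⧸ I) :=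
  (homogeneousSubmodule (Fin r) k d).map (Ideal.Quotient.mkₐ k I).toLinearMap

/-- The Hilbert function of the quotient `k[x_1,…,x_r]/I`. -/
noncomputable def hilb (k : Type) [Field k] (r : ℕ)
    (I : Ideal (MvPolynomial (Fin r) k)) (d : ℕ) : ℕ :=
  Module.finrank k (quotPiece k r I d)

/-- `A = k[x_1,…,x_r]/I` is a level standard graded artinian algebra of socle degree `e` and
type `t`: the ideal `I` is homogeneous, the Hilbert function of `A` vanishes in degrees `> e`
and equals `t` in degree `e`, and the socle of `A` (the annihilator of the irrelevant maximal
ideal) coincides with the degree-`e` graded piece `A_e`. -/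
def IsLevelQuot (k : Type) [Field k] (r e t : ℕ)
    (I : Ideal (MvPolynomial (Fin r) k)) : Prop :=
  (∀ f ∈ I, ∀ d, homogeneousComponent d f ∈ I) ∧
  (∀ d, e < d → hilb k r I d = 0) ∧
  hilb k r I e = t ∧
  {a : MvPolynomial (Fin r) k ⧸ I | ∀ i, a * Ideal.Quotient.mk I (X i) = 0} =
    (quotPiece k r I e : Set (MvPolynomial (Fin r) k ⧸ I))

section Aux

variable {k : Type} [Field k]

local notation "Poly" => MvPolynomial (Fin 3) k
local notation "Form" => homogeneousSubmodule (Fin 3) k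

/-! ### Linear algebra -/

lemma finrank_add_finrank_ker_flip_le {V W : Type*} [AddCommGroup V] [Module k V]
    [AddCommGroup W] [Module k W] [FiniteDimensional k V] [FiniteDimensional k W]
    (T : V →ₗ[k] W →ₗ[k] k) :
    Module.finrank k V + Module.finrank k (LinearMap.ker T.flip) ≤
      Module.finrank k (LinearMap.ker T) + Module.finrank k W := by
  have h1 := T.finrank_range_add_finrank_ker
  have h2 : LinearMap.range T ≤ (LinearMap.ker T.flip).dualAnnihilator := by
    rintro _ ⟨v, rfl⟩
    rw [Submodule.mem_dualAnnihilator]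
    intro w hw
    exact LinearMap.congr_fun (LinearMap.mem_ker.1 hw) v
  have h3 : Module.finrank k (LinearMap.range T) + Module.finrank k (LinearMap.ker T.flip) ≤
      Module.finrank k W := by
    rw [← Subspace.finrank_add_finrank_dualAnnihilator_eq (LinearMap.ker T.flip), add_comm]
    exact Nat.add_le_add_left (Submodule.finrank_mono h2) _
  omega

lemma finrank_ker_add_finrank {V W : Type*} [AddCommGroup V] [Module k V]
    [AddCommGroup W] [Module k W] [FiniteDimensional k V] [FiniteDimensional k W]
    (T : V →ₗ[k] W →ₗ[k] k) :
    Module.finrank k (LinearMap.ker T) + Module.finrank k W =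
      Module.finrank k V + Module.finrank k (LinearMap.ker T.flip) := by
  have h1 := finrank_add_finrank_ker_flip_le T
  have h2 : Module.finrank k W + Module.finrank k (LinearMap.ker T) ≤
      Module.finrank k (LinearMap.ker T.flip) + Module.finrank k V :=
    finrank_add_finrank_ker_flip_le T.flip
  omega

lemma exists_smul_eq_of_rank_le_one {V U : Type*} [AddCommGroup V] [Module k V]
    [AddCommGroup U] [Module k U] [FiniteDimensional k V]
    (T : V →ₗ[k] U) (h : Module.finrank k (LinearMap.range T) ≤ 1) :
    ∃ E : U, ∀ p, ∃ c : k, T p = c • E := by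
  obtain ⟨E, hE⟩ := finrank_le_one_iff.1 h
  refine ⟨E.1, fun p => ?_⟩
  obtain ⟨c, hc⟩ := hE ⟨T p, p, rfl⟩
  exact ⟨c, (congrArg Subtype.val hc).symm⟩

/-- The `2 × 2` minors of a bilinear form of rank at most one vanish. -/
lemma minor_eq_of_rank_le_one {V W : Type*} [AddCommGroup V] [Module k V]
    [AddCommGroup W] [Module k W] [FiniteDimensional k V]
    (T : V →ₗ[k] W →ₗ[k] k) (h : Module.finrank k (LinearMap.range T) ≤ 1) (p p' : V) (u u' : W) :
    T p u * T p' u' = T p u' * T p' u := by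
  obtain ⟨E, hE⟩ := exists_smul_eq_of_rank_le_one T h
  obtain ⟨c, hc⟩ := hE p
  obtain ⟨c', hc'⟩ := hE p'
  simp only [hc, hc', LinearMap.smul_apply, smul_eq_mul]
  ring

/-! ### Homogeneous polynomials in three variables -/

instance (n : ℕ) : FiniteDimensional k (Form n) :=
  Module.Finite.iff_fg.2 (homogeneousSubmodule_fg _ _ n)

lemma finrank_homog (n : ℕ) : Module.finrank k (Form n) = (n + 2).choose 2 := by
  have hs : ({d : Fin 3 →₀ ℕ | d.degree = n} : Set (Fin 3 →₀ ℕ)) =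
      ↑(Finset.univ.finsuppAntidiag n : Finset (Fin 3 →₀ ℕ)) := by
    ext d
    simp [Finset.mem_finsuppAntidiag, Finsupp.degree_eq_sum]
  rw [homogeneousSubmodule_eq_finsupp_supported, hs]
  have e := AddMonoidAlgebra.supportedEquivFinsupp (R := k) (S := k)
    (↑(Finset.univ.finsuppAntidiag n : Finset (Fin 3 →₀ ℕ)) : Set (Fin 3 →₀ ℕ))
  refine (LinearEquiv.finrank_eq e).trans ?_
  rw [Module.finrank_finsupp_self]
  simp only [Finset.coe_sort_coe, Fintype.card_coe]
  rw [Finset.card_finsuppAntidiag_nat_eq_choose]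
  simp [Nat.add_comm n 2]
  rw [← Nat.choose_symm_of_eq_add (n := 2 + n) (a := 2) (b := n) rfl]

lemma homog_mul {a b n : ℕ} {p q : Poly} (hp : p ∈ Form a) (hq : q ∈ Form b) (h : a + b = n) :
    p * q ∈ Form n := h ▸ IsHomogeneous.mul hp hq

/-- Homogeneous forms of positive degree are sums of products with linear forms. -/
lemma eq_zero_of_linear_mul (g : Poly →ₗ[k] k) (n : ℕ)
    (h : ∀ m ∈ Form 1, ∀ u ∈ Form n, g (m * u) = 0) : ∀ r ∈ Form (n + 1), g r = 0 := by
  intro r hr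
  rw [← homogeneousSubmodule_one_pow, pow_succ', homogeneousSubmodule_one_pow] at hr
  induction hr using Submodule.mul_induction_on' with
  | mem_mul_mem m hm u hu => exact h m hm u hu
  | add x hx y hy h1 h2 => rw [map_add, h1, h2, add_zero]

/-- The quotient of a form by a linear form dividing it may be taken homogeneous. -/
lemma exists_homog_quot {l p : Poly} {n : ℕ} (hl : l ∈ Form 1) (hp : p ∈ Form (n + 1))
    (hd : l ∣ p) : ∃ s ∈ Form n, p = l * s := by
  obtain ⟨s, rfl⟩ := hd
  refine ⟨homogeneousComponent n s, homogeneousComponent_mem n s, ?_⟩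
  have h1 : l * s = homogeneousComponent (n + 1) (l * s) :=
    (homogeneousComponent_eq_self hp).symm
  have h2 : l * s = ∑ i ∈ Finset.range (s.totalDegree + 1), l * homogeneousComponent i s := by
    rw [← Finset.mul_sum, sum_homogeneousComponent]
  rw [h1]
  conv_lhs => rw [h2]
  rw [map_sum]
  have h3 : ∀ i, homogeneousComponent (n + 1) (l * homogeneousComponent i s) =
      if i = n then l * homogeneousComponent n s else 0 := by
    intro i
    rw [homogeneousComponent_of_mem (homog_mul hl (homogeneousComponent_mem i s) rfl)]
    by_cases h : i = n
    · subst h; simp [add_comm]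
    · rw [if_neg h, if_neg (by omega)]
  simp only [h3, Finset.sum_ite_eq', Finset.mem_range]
  split_ifs with h
  · rfl
  · rw [homogeneousComponent_eq_zero _ _ (by omega), mul_zero]

lemma prime_linear {l : Poly} (hl : l ∈ Form 1) (h0 : l ≠ 0) : Prime l := by
  have ht : l.totalDegree = 1 := IsHomogeneous.totalDegree hl h0
  refine (irreducible_of_totalDegree_eq_one ht ?_).prime
  intro x hx
  obtain ⟨d, hd⟩ := ne_zero_iff.1 h0
  exact isUnit_of_dvd_unit (hx d) (isUnit_iff_ne_zero.2 hd)

/-! ### Linear syzygies of a pair of functionals -/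

/-- For functionals `φ, ψ` on the polynomial ring, the bilinear map
`((p, q), r) ↦ φ (p r) + ψ (q r)` for `p, q` of degree `d` and `r` of degree `e`. Its left kernel
is the space of degree `d` syzygies of `(φ, ψ)` under the contraction action. -/
noncomputable def pairing (φ ψ : Poly →ₗ[k] k) (d e : ℕ) : (Form d × Form d) →ₗ[k] Form e →ₗ[k] k :=
  LinearMap.mk₂ k (fun v r => φ (v.1.1 * r.1) + ψ (v.2.1 * r.1))
    (by intros; simp [add_mul]; ring)
    (by intros; simp [mul_add])
    (by intros; simp [mul_add]; ring)
    (by intros; simp [mul_add])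

lemma mem_ker_pairing {φ ψ : Poly →ₗ[k] k} {d e : ℕ} {v : Form d × Form d} :
    v ∈ LinearMap.ker (pairing φ ψ d e) ↔ ∀ r ∈ Form e, φ (v.1.1 * r) + ψ (v.2.1 * r) = 0 := by
  rw [LinearMap.mem_ker]
  constructor
  · intro h r hr
    exact LinearMap.congr_fun h ⟨r, hr⟩
  · intro h
    ext r
    exact h r.1 r.2

/-- The bilinear map `(p, r) ↦ F (p r)` for `p` of degree `d` and `r` of degree `e`. -/
noncomputable def catal (F : Poly →ₗ[k] k) (d e : ℕ) : Form d →ₗ[k] Form e →ₗ[k] k :=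
  LinearMap.mk₂ k (fun v r => F (v.1 * r.1))
    (by intros; simp [add_mul])
    (by intros; simp)
    (by intros; simp [mul_add])
    (by intros; simp)

lemma mem_ker_catal {F : Poly →ₗ[k] k} {d e : ℕ} {v : Form d} :
    v ∈ LinearMap.ker (catal F d e) ↔ ∀ r ∈ Form e, F (v.1 * r) = 0 := by
  rw [LinearMap.mem_ker]
  constructor
  · intro h r hr
    exact LinearMap.congr_fun h ⟨r, hr⟩
  · intro h
    ext r
    exact h r.1 r.2

/-- If the contractions of a degree 7 functional `F` by quadrics span at most a line, then `F` is
annihilated by a plane of linear forms. When `F (p₀ m w) ≠ 0` with `p₀, m, w` of degrees 2, 1, 4,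
such a plane is the kernel of `l ↦ F (p₀ l w)`. -/
lemma two_le_ker_catal (F : Poly →ₗ[k] k)
    (h5 : 5 ≤ Module.finrank k (LinearMap.ker (catal F 2 5))) :
    2 ≤ Module.finrank k (LinearMap.ker (catal F 1 6)) := by
  by_cases hF : ∀ p ∈ Form 2, ∀ u ∈ Form 5, F (p * u) = 0
  · have ht : LinearMap.ker (catal F 1 6) = ⊤ := by
      rw [eq_top_iff]
      intro l _
      rw [mem_ker_catal]
      intro r hr
      refine eq_zero_of_linear_mul (F ∘ₗ LinearMap.mulLeft k l.1) 5 ?_ r hr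
      intro m hm u hu
      have := hF (l.1 * m) (homog_mul l.2 hm rfl) u hu
      simpa [mul_assoc] using this
    rw [ht, finrank_top, finrank_homog]
    decide
  push Not at hF
  obtain ⟨p0, hp0, hne⟩ := hF
  obtain ⟨m, hm, w, hw, hmw⟩ : ∃ m ∈ Form 1, ∃ w ∈ Form 4, F (p0 * (m * w)) ≠ 0 := by
    by_contra! hcon
    obtain ⟨u, hu, hne⟩ := hne
    exact hne (eq_zero_of_linear_mul (F ∘ₗ LinearMap.mulLeft k p0) 4 hcon u hu)
  have hrank : Module.finrank k (LinearMap.range (catal F 2 5)) ≤ 1 := by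
    have h1 := (catal F 2 5).finrank_range_add_finrank_ker
    rw [finrank_homog] at h1
    have : (2 + 2).choose 2 = 6 := by decide
    omega
  have minor : ∀ p ∈ Form 2, ∀ p' ∈ Form 2, ∀ u ∈ Form 5, ∀ u' ∈ Form 5,
      F (p * u) * F (p' * u') = F (p * u') * F (p' * u) := fun p hp p' hp' u hu u' hu' =>
    minor_eq_of_rank_le_one (catal F 2 5) hrank ⟨p, hp⟩ ⟨p', hp'⟩ ⟨u, hu⟩ ⟨u', hu'⟩
  let τ : Form 1 →ₗ[k] k := F ∘ₗ LinearMap.mulLeft k p0 ∘ₗ LinearMap.mulRight k w ∘ₗ (Form 1).subtype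
  have hτ : 2 ≤ Module.finrank k (LinearMap.ker τ) := by
    have h1 := τ.finrank_range_add_finrank_ker
    have h2 := (LinearMap.range τ).finrank_le
    rw [finrank_homog] at h1
    have : (1 + 2).choose 2 = 3 := by decide
    rw [Module.finrank_self] at h2
    omega
  refine hτ.trans (Submodule.finrank_mono ?_)
  rintro ⟨l, hl⟩ hlτ
  have hl0 : F (p0 * (l * w)) = 0 := hlτ
  rw [mem_ker_catal]
  intro r hr
  refine eq_zero_of_linear_mul (F ∘ₗ LinearMap.mulLeft k l) 5 ?_ r hr
  intro l' hl' u hu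
  change F (l * (l' * u)) = 0
  have hmw5 : m * w ∈ Form 5 := homog_mul hm hw rfl
  have hlw5 : l * w ∈ Form 5 := homog_mul hl hw rfl
  have a1 := minor (l' * m) (homog_mul hl' hm rfl) p0 hp0 _ hlw5 _ hmw5
  have a2 := minor (l * l') (homog_mul hl hl' rfl) p0 hp0 _ hu _ hmw5
  rw [hl0, mul_zero, mul_eq_zero, or_iff_left hmw] at a1
  rw [show l * l' * (m * w) = l' * m * (l * w) by ring, a1, zero_mul, mul_eq_zero,
    or_iff_left hmw, mul_assoc] at a2
  exact a2

/-- If no cubic annihilates both `φ` and `ψ`, the spaces of syzygies of `(φ, ψ)` of degrees one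
and two cannot have dimensions 1 and 5. Indeed, for a linear syzygy `(l₁, l₂)` and a quadratic
one `(p, q)`, the cubic `l₂ p - l₁ q` annihilates both functionals. -/
lemma no_linear_syzygy (φ ψ : Poly →ₗ[k] k)
    (h3 : ∀ c ∈ Form 3, (∀ r ∈ Form 4, φ (c * r) = 0 ∧ ψ (c * r) = 0) → c = 0)
    (hN1 : Module.finrank k (LinearMap.ker (pairing φ ψ 1 6)) = 1)
    (hN2 : Module.finrank k (LinearMap.ker (pairing φ ψ 2 5)) = 5)
    {l₁ l₂ : Poly} (hl₁ : l₁ ∈ Form 1) (hl₂ : l₂ ∈ Form 1) (h0 : l₁ ≠ 0)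
    (hl : ∀ r ∈ Form 6, φ (l₁ * r) + ψ (l₂ * r) = 0) : False := by
  have hprop : ∀ v ∈ LinearMap.ker (pairing φ ψ 2 5), l₂ * v.1.1 = l₁ * v.2.1 := by
    rintro ⟨⟨p, hp⟩, ⟨q, hq⟩⟩ hv
    rw [mem_ker_pairing] at hv
    simp only at hv ⊢
    rw [← sub_eq_zero]
    refine h3 _ (Submodule.sub_mem _ (homog_mul hl₂ hp rfl) (homog_mul hl₁ hq rfl)) ?_
    intro r hr
    have a1 := hv (l₂ * r) (homog_mul hl₂ hr rfl)
    have a2 := hv (l₁ * r) (homog_mul hl₁ hr rfl)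
    have a3 := hl (p * r) (homog_mul hp hr rfl)
    have a4 := hl (q * r) (homog_mul hq hr rfl)
    constructor
    · rw [show (l₂ * p - l₁ * q) * r = p * (l₂ * r) - l₁ * (q * r) by ring, map_sub]
      rw [show q * (l₂ * r) = l₂ * (q * r) by ring] at a1
      linear_combination a1 - a4
    · rw [show (l₂ * p - l₁ * q) * r = l₂ * (p * r) - q * (l₁ * r) by ring, map_sub]
      rw [show p * (l₁ * r) = l₁ * (p * r) by ring] at a2
      linear_combination a3 - a2
  by_cases hd : l₁ ∣ l₂
  · -- the linear syzygy is `l₁ • (1, β)`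
    obtain ⟨s, hs, hs2⟩ := exists_homog_quot (n := 0) hl₁ hl₂ hd
    obtain ⟨β, rfl⟩ : ∃ β : k, s = C β :=
      ⟨_, totalDegree_eq_zero_iff_eq_C.1 (Nat.le_zero.1 (IsHomogeneous.totalDegree_le hs))⟩
    have hq : ∀ v ∈ LinearMap.ker (pairing φ ψ 2 5), v.2 = β • v.1 := by
      intro v hv
      have := hprop v hv
      rw [hs2, mul_assoc] at this
      apply Subtype.ext
      rw [← mul_left_cancel₀ h0 this]
      simp [smul_eq_C_mul]
    have hS2 : 5 ≤ Module.finrank k (LinearMap.ker (catal (φ + β • ψ) 2 5)) := by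
      refine hN2.symm.le.trans ?_
      let f : LinearMap.ker (pairing φ ψ 2 5) →ₗ[k] Form 2 :=
        LinearMap.fst k (Form 2) (Form 2) ∘ₗ (LinearMap.ker (pairing φ ψ 2 5)).subtype
      have hf : ∀ v, f v ∈ LinearMap.ker (catal (φ + β • ψ) 2 5) := by
        rintro ⟨v, hv⟩
        rw [mem_ker_catal]
        intro r hr
        have := mem_ker_pairing.1 hv r hr
        rw [hq v hv] at this
        simpa [f] using this
      refine LinearMap.finrank_le_finrank_of_injective (f := f.codRestrict _ hf) ?_
      rintro ⟨v, hv⟩ ⟨w, hw⟩ hvw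
      have h1 : v.1 = w.1 := congrArg Subtype.val hvw
      apply Subtype.ext
      refine Prod.ext h1 ?_
      change v.2 = w.2
      rw [hq v hv, hq w hw, h1]
    have hS1 := two_le_ker_catal _ hS2
    have hS1' : Module.finrank k (LinearMap.ker (catal (φ + β • ψ) 1 6)) ≤ 1 := by
      refine le_trans ?_ hN1.le
      let f : LinearMap.ker (catal (φ + β • ψ) 1 6) →ₗ[k] Form 1 × Form 1 :=
        (LinearMap.id.prod (β • LinearMap.id)) ∘ₗ (LinearMap.ker (catal (φ + β • ψ) 1 6)).subtype
      have hf : ∀ v, f v ∈ LinearMap.ker (pairing φ ψ 1 6) := by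
        rintro ⟨v, hv⟩
        rw [mem_ker_pairing]
        intro r hr
        have := mem_ker_catal.1 hv r hr
        simpa [f] using this
      refine LinearMap.finrank_le_finrank_of_injective (f := f.codRestrict _ hf) ?_
      rintro ⟨v, hv⟩ ⟨w, hw⟩ hvw
      exact Subtype.ext (congrArg Prod.fst (congrArg Subtype.val hvw))
    omega
  · -- `l₁, l₂` are coprime, so every quadratic syzygy is a multiple of `(l₁, l₂)`
    have hdiv : ∀ v ∈ LinearMap.ker (pairing φ ψ 2 5),
        ∃ s ∈ Form 1, v.1.1 = l₁ * s ∧ v.2.1 = l₂ * s := by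
      intro v hv
      have hv' := hprop v hv
      have h1 : l₁ ∣ v.1.1 :=
        ((prime_linear hl₁ h0).dvd_or_dvd ⟨_, hv'⟩).resolve_left hd
      obtain ⟨s, hs, hs1⟩ := exists_homog_quot (n := 1) hl₁ v.1.2 h1
      refine ⟨s, hs, hs1, mul_left_cancel₀ h0 ?_⟩
      rw [← hv', hs1]
      ring
    let g : Form 1 →ₗ[k] Poly × Poly :=
      ((LinearMap.mulLeft k l₁).prod (LinearMap.mulLeft k l₂)) ∘ₗ (Form 1).subtype
    let ι : LinearMap.ker (pairing φ ψ 2 5) →ₗ[k] Poly × Poly :=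
      ((Form 2).subtype.prodMap (Form 2).subtype) ∘ₗ (LinearMap.ker (pairing φ ψ 2 5)).subtype
    have hι : ∀ v, ι v ∈ LinearMap.range g := by
      rintro ⟨v, hv⟩
      obtain ⟨s, hs, e1, e2⟩ := hdiv v hv
      exact ⟨⟨s, hs⟩, Prod.ext e1.symm e2.symm⟩
    have hle : Module.finrank k (LinearMap.ker (pairing φ ψ 2 5)) ≤
        Module.finrank k (LinearMap.range g) := by
      refine LinearMap.finrank_le_finrank_of_injective (f := ι.codRestrict _ hι) ?_
      rintro ⟨v, hv⟩ ⟨w, hw⟩ hvw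
      have := congrArg Subtype.val hvw
      apply Subtype.ext
      exact Prod.ext (Subtype.ext (congrArg Prod.fst this)) (Subtype.ext (congrArg Prod.snd this))
    have h1 := LinearMap.finrank_range_le g
    rw [finrank_homog] at h1
    have : (1 + 2).choose 2 = 3 := by decide
    omega

/-! ### Level quotients -/

lemma quotPiece_eq_range (I : Ideal Poly) (d : ℕ) :
    quotPiece k 3 I d =
      LinearMap.range ((Ideal.Quotient.mkₐ k I).toLinearMap.domRestrict (Form d)) :=
  (LinearMap.range_domRestrict _ _).symm

lemma hilb_add (I : Ideal Poly) (d : ℕ) :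
    hilb k 3 I d + Module.finrank k (LinearMap.ker
      ((Ideal.Quotient.mkₐ k I).toLinearMap.domRestrict (Form d))) = (d + 2).choose 2 := by
  rw [hilb, quotPiece_eq_range, LinearMap.finrank_range_add_finrank_ker, finrank_homog]

lemma mem_ker_quot {I : Ideal Poly} {d : ℕ} {p : Form d} :
    p ∈ LinearMap.ker ((Ideal.Quotient.mkₐ k I).toLinearMap.domRestrict (Form d)) ↔ p.1 ∈ I := by
  rw [LinearMap.mem_ker]
  exact Ideal.Quotient.eq_zero_iff_mem

/-- In a level quotient of socle degree `e`, a form of degree at most `e` lies in the ideal as soon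
as all its multiples in degree `e` do. -/
lemma mem_of_mul_mem {I : Ideal Poly} {e t : ℕ} (hI : IsLevelQuot k 3 e t I) :
    ∀ n d : ℕ, d + n = e → ∀ p ∈ Form d, (∀ r ∈ Form n, p * r ∈ I) → p ∈ I := by
  intro n
  induction n with
  | zero =>
    intro d _ p _ h
    simpa using h 1 (isHomogeneous_one _ _)
  | succ n ih =>
    intro d hd p hp h
    have hX : ∀ i : Fin 3, p * X i ∈ I := by
      intro i
      refine ih (d + 1) (by omega) _ (homog_mul hp (isHomogeneous_X k i) rfl) ?_
      intro r hr
      rw [mul_assoc]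
      exact h _ (homog_mul (isHomogeneous_X k i) hr (by omega))
    have hsoc : Ideal.Quotient.mk I p ∈
        {a : Poly ⧸ I | ∀ i, a * Ideal.Quotient.mk I (X i) = 0} := by
      intro i
      rw [← map_mul]
      exact Ideal.Quotient.eq_zero_iff_mem.2 (hX i)
    rw [hI.2.2.2] at hsoc
    obtain ⟨q, hq, hqp⟩ := hsoc
    have hqp' : q - p ∈ I := Ideal.Quotient.eq.1 hqp
    -- the degree `d` component of `q - p` is `-p`, since `q` has degree `e > d`
    have hc := hI.1 _ hqp' d
    rw [map_sub, homogeneousComponent_eq_self hp, homogeneousComponent_of_mem hq,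
      if_neg (by omega), zero_sub, neg_mem_iff] at hc
    exact hc

/-- If the degree `e` piece of the quotient by `I` is two-dimensional, the degree `e` part of `I` is
cut out by two functionals. -/
lemma exists_functionals (I : Ideal Poly) (e : ℕ) (h : hilb k 3 I e = 2) :
    ∃ φ ψ : Poly →ₗ[k] k, ∀ p ∈ Form e, (p ∈ I ↔ φ p = 0 ∧ ψ p = 0) := by
  have : FiniteDimensional k (quotPiece k 3 I e) :=
    FiniteDimensional.of_finrank_pos (by unfold hilb at h; omega)
  let b : Module.Basis (Fin 2) k (quotPiece k 3 I e) := Module.finBasisOfFinrankEq _ _ h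
  obtain ⟨f, hf⟩ := LinearMap.exists_extend (b.coord 0)
  obtain ⟨g, hg⟩ := LinearMap.exists_extend (b.coord 1)
  refine ⟨f ∘ₗ (Ideal.Quotient.mkₐ k I).toLinearMap, g ∘ₗ (Ideal.Quotient.mkₐ k I).toLinearMap,
    fun p hp => ?_⟩
  let a : quotPiece k 3 I e := ⟨(Ideal.Quotient.mkₐ k I).toLinearMap p, p, hp, rfl⟩
  have hfa : f ((Ideal.Quotient.mkₐ k I).toLinearMap p) = b.repr a 0 :=
    LinearMap.congr_fun hf a
  have hga : g ((Ideal.Quotient.mkₐ k I).toLinearMap p) = b.repr a 1 :=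
    LinearMap.congr_fun hg a
  rw [LinearMap.comp_apply, LinearMap.comp_apply, hfa, hga]
  have h1 : p ∈ I ↔ a = 0 := by
    rw [← Submodule.coe_eq_zero]
    exact Ideal.Quotient.eq_zero_iff_mem.symm
  rw [h1, ← b.repr.map_eq_zero_iff, Finsupp.ext_iff, Fin.forall_fin_two]
  rfl

/-- Macaulay duality, dimension count: the syzygies of degree `d` have codimension `h_e`, where
`e` is the complementary degree. -/
lemma finrank_syzygies {I : Ideal Poly} {φ ψ : Poly →ₗ[k] k} {d e : ℕ}
    (hI : ∀ p ∈ Form e, (p ∈ I ↔ ∀ r ∈ Form d, φ (p * r) = 0 ∧ ψ (p * r) = 0)) :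
    Module.finrank k (LinearMap.ker (pairing φ ψ d e)) + hilb k 3 I e =
      2 * (d + 2).choose 2 := by
  have h1 := finrank_ker_add_finrank (pairing φ ψ d e)
  have h2 := hilb_add I e
  have h3 : LinearMap.ker (pairing φ ψ d e).flip = LinearMap.ker
      ((Ideal.Quotient.mkₐ k I).toLinearMap.domRestrict (Form e)) := by
    ext ⟨p, hp⟩
    rw [mem_ker_quot, hI p hp, LinearMap.mem_ker]
    constructor
    · intro h r hr
      have a1 : φ (r * p) + ψ (0 * p) = 0 := LinearMap.congr_fun h (⟨r, hr⟩, 0)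
      have a2 : φ (0 * p) + ψ (r * p) = 0 := LinearMap.congr_fun h (0, ⟨r, hr⟩)
      rw [mul_comm p r]
      simpa using And.intro a1 a2
    · intro h
      refine LinearMap.ext fun v => ?_
      change φ (v.1.1 * p) + ψ (v.2.1 * p) = 0
      rw [mul_comm, (h _ v.1.2).1, mul_comm, (h _ v.2.2).2, add_zero]
  rw [h3, Module.finrank_prod, finrank_homog, finrank_homog] at h1
  omega

end Aux

/-- Remark 2.4 ii): `(1,3,6,10,9,7,5,2)` is not a level `h`-vector. -/
theorem stmt17 (k : Type) [Field k] [CharZero k] :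
    ¬ ∃ I : Ideal (MvPolynomial (Fin 3) k),
        IsLevelQuot k 3 7 2 I ∧
        hilb k 3 I 0 = 1 ∧ hilb k 3 I 1 = 3 ∧ hilb k 3 I 2 = 6 ∧ hilb k 3 I 3 = 10 ∧
        hilb k 3 I 4 = 9 ∧ hilb k 3 I 5 = 7 ∧ hilb k 3 I 6 = 5 ∧ hilb k 3 I 7 = 2 := by
  rintro ⟨I, hI, -, h1, h2, h3, h4, h5, h6, h7⟩
  obtain ⟨φ, ψ, hφψ⟩ := exists_functionals I 7 h7
  have hker : ∀ d e : ℕ, e + d = 7 → ∀ p ∈ homogeneousSubmodule (Fin 3) k e,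
      (p ∈ I ↔ ∀ r ∈ homogeneousSubmodule (Fin 3) k d, φ (p * r) = 0 ∧ ψ (p * r) = 0) := by
    intro d e hde p hp
    constructor
    · intro h r hr
      exact (hφψ _ (homog_mul hp hr hde)).1 (I.mul_mem_right r h)
    · intro h
      exact mem_of_mul_mem hI d e hde p hp fun r hr => (hφψ _ (homog_mul hp hr hde)).2 (h r hr)
  have hker' : ∀ d e : ℕ, e + d = 7 → ∀ p ∈ homogeneousSubmodule (Fin 3) k e,
      (p ∈ I ↔ ∀ r ∈ homogeneousSubmodule (Fin 3) k d, ψ (p * r) = 0 ∧ φ (p * r) = 0) := by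
    intro d e hde p hp
    simp only [hker d e hde p hp, and_comm]
  -- `h_3 = 10` says that the ideal contains no cubics
  have hI3 : ∀ c ∈ homogeneousSubmodule (Fin 3) k 3, c ∈ I → c = 0 := by
    intro c hc hcI
    have a := hilb_add I 3
    have e3 : (3 + 2).choose 2 = 10 := by decide
    have b := Submodule.finrank_eq_zero.1 (show Module.finrank k (LinearMap.ker
      ((Ideal.Quotient.mkₐ k I).toLinearMap.domRestrict (homogeneousSubmodule (Fin 3) k 3))) = 0
      by omega)
    have c' := mem_ker_quot (p := ⟨c, hc⟩).2 hcI
    rw [b, Submodule.mem_bot] at c'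
    exact congrArg Subtype.val c'
  have e1 : (1 + 2).choose 2 = 3 := by decide
  have e2 : (2 + 2).choose 2 = 6 := by decide
  have n1 := finrank_syzygies (hker 1 6 rfl)
  have n2 := finrank_syzygies (hker 2 5 rfl)
  have n1' := finrank_syzygies (hker' 1 6 rfl)
  have n2' := finrank_syzygies (hker' 2 5 rfl)
  -- `2 * 3 - h_6 = 1`, so there is a nonzero linear syzygy
  have hpos : LinearMap.ker (pairing φ ψ 1 6) ≠ ⊥ := by
    intro h
    rw [h, finrank_bot] at n1
    omega
  obtain ⟨v, hv, hv0⟩ := Submodule.exists_mem_ne_zero_of_ne_bot hpos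
  rw [mem_ker_pairing] at hv
  by_cases hv1 : v.1 = 0
  · have hv2 : v.2.1 ≠ 0 := fun h => hv0 (Prod.ext hv1 (Subtype.ext h))
    exact no_linear_syzygy ψ φ (fun c hc h => hI3 c hc ((hker' 4 3 rfl c hc).2 h))
      (by omega) (by omega) v.2.2 v.1.2 hv2 (fun r hr => by rw [add_comm]; exact hv r hr)
  · exact no_linear_syzygy φ ψ (fun c hc h => hI3 c hc ((hker 4 3 rfl c hc).2 h))
      (by omega) (by omega) v.1.2 v.2.2 (fun h => hv1 (Subtype.ext h)) hv
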